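/- arXiv:2108.00931 — 4 statements merged into one kernel-verified Lean document; each statement's English description precedes it below -/
import Mathlib

section
/- Let φ₀, φ₁ ∈ ℂ^(2^n) be nonzero vectors and let G be the subgroup of invertible 2^n × 2^n complex matrices generated by Stab(φ₀) ∪ Stab(φ₁). If R is an n-qubit Pauli string and ν, ν′ ∈ ℂ∖{0} satisfy νR ∈ G and ν′R ∈ G, then ν = ν′ or ν = −ν′. -/
open Matrix

noncomputable section

/-- The single-qubit Pauli matrices. -/
def pauliI : Matrix (Fin 2) (Fin 2) ℂ := 1
def pauliX : Matrix (Fin 2) (Fin 2) ℂ := !![0, 1; 1, 0]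
def pauliY : Matrix (Fin 2) (Fin 2) ℂ := !![0, -Complex.I; Complex.I, 0]
def pauliZ : Matrix (Fin 2) (Fin 2) ℂ := !![1, 0; 0, -1]

/-- Kronecker product of a `2 × 2` matrix (most significant qubit) with a
`2^m × 2^m` matrix, indexed by `Fin (2^(m+1))`. -/
def kron {m : ℕ} (A : Matrix (Fin 2) (Fin 2) ℂ) (B : Matrix (Fin (2 ^ m)) (Fin (2 ^ m)) ℂ) :
    Matrix (Fin (2 ^ (m + 1))) (Fin (2 ^ (m + 1))) ℂ := fun i j =>
  A (if (i : ℕ) < 2 ^ m then 0 else 1) (if (j : ℕ) < 2 ^ m then 0 else 1) *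
    B ⟨(i : ℕ) % 2 ^ m, Nat.mod_lt _ (pow_pos (by norm_num) m)⟩
      ⟨(j : ℕ) % 2 ^ m, Nat.mod_lt _ (pow_pos (by norm_num) m)⟩

/-- `IsPauliString n M` holds iff `M` is a Kronecker product of `n` single-qubit
Pauli matrices. -/
def IsPauliString : (n : ℕ) → Matrix (Fin (2 ^ n)) (Fin (2 ^ n)) ℂ → Prop
  | 0, M => M = 1
  | n + 1, M => ∃ Q ∈ ({pauliI, pauliX, pauliY, pauliZ} : Set (Matrix (Fin 2) (Fin 2) ℂ)),
      ∃ B, IsPauliString n B ∧ M = kron Q B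

/-- An `n`-qubit Pauli LIM: a nonzero scalar multiple of an `n`-qubit Pauli string. -/
def IsPauliLIM (n : ℕ) (A : Matrix (Fin (2 ^ n)) (Fin (2 ^ n)) ℂ) : Prop :=
  ∃ (c : ℂ) (P : Matrix (Fin (2 ^ n)) (Fin (2 ^ n)) ℂ),
    c ≠ 0 ∧ IsPauliString n P ∧ A = c • P

/-- The stabilizer set of a vector: all `n`-qubit Pauli LIMs fixing `φ`. -/
def PauliStab {n : ℕ} (φ : Fin (2 ^ n) → ℂ) : Set (Matrix (Fin (2 ^ n)) (Fin (2 ^ n)) ℂ) :=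
  {A | IsPauliLIM n A ∧ A.mulVec φ = φ}

/-- Two vectors are Pauli-isomorphic if some Pauli LIM maps one to the other. -/
def PauliIso {n : ℕ} (φ ψ : Fin (2 ^ n) → ℂ) : Prop :=
  ∃ A, IsPauliLIM n A ∧ A.mulVec φ = ψ

/-- Membership in the `n`-qubit Pauli group: `i^k · P` with `P` a Pauli string. -/
def InPauliGroup (n : ℕ) (A : Matrix (Fin (2 ^ n)) (Fin (2 ^ n)) ℂ) : Prop :=
  ∃ (k : Fin 4) (P : Matrix (Fin (2 ^ n)) (Fin (2 ^ n)) ℂ),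
    IsPauliString n P ∧ A = (Complex.I ^ (k : ℕ)) • P

/-- The vector `|0⟩⊗φ₀ + |1⟩⊗φ₁`: first `2^m` coordinates are `φ₀`, last are `φ₁`. -/
def dirac {m : ℕ} (φ₀ φ₁ : Fin (2 ^ m) → ℂ) : Fin (2 ^ (m + 1)) → ℂ := fun i =>
  if h : (i : ℕ) < 2 ^ m then φ₀ ⟨i, h⟩
  else φ₁ ⟨(i : ℕ) - 2 ^ m, by
    have h1 := i.isLt
    have h2 : (2 : ℕ) ^ (m + 1) = 2 ^ m + 2 ^ m := by rw [pow_succ]; omega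
    omega⟩

/-- An `n`-qubit stabilizer state: a unit vector stabilized by exactly `2^n`
elements of the Pauli group. -/
def IsStabilizerState (n : ℕ) (φ : Fin (2 ^ n) → ℂ) : Prop :=
  (∑ i, Complex.normSq (φ i)) = 1 ∧
    Set.ncard {A : Matrix (Fin (2 ^ n)) (Fin (2 ^ n)) ℂ |
      InPauliGroup n A ∧ A.mulVec φ = φ} = 2 ^ n

/-- The standard Hermitian inner product on `ℂ^N`. -/
def hinner {N : ℕ} (φ ψ : Fin N → ℂ) : ℂ :=
  ∑ i, (starRingEnd ℂ) (φ i) * ψ i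



/-- `Z^{a_m} ⊗ ⋯ ⊗ Z^{a_1}` (the `j`-th tensor factor is `Z` iff `a j = true`). -/
def zString : (m : ℕ) → (Fin m → Bool) → Matrix (Fin (2 ^ m)) (Fin (2 ^ m)) ℂ
  | 0, _ => 1
  | m + 1, a => kron (if a (Fin.last m) then pauliZ else 1) (zString m (fun j => a j.castSucc))

open Classical in
/-- Number of edges of `G` with both endpoints in the set of vertices
`j` with `x.testBit j = true`. -/
def edgeCount {n : ℕ} (G : SimpleGraph (Fin n)) (x : ℕ) : ℕ :=
  (Finset.univ.filter (fun p : Fin n × Fin n =>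
    p.1 < p.2 ∧ G.Adj p.1 p.2 ∧ x.testBit p.1.val = true ∧ x.testBit p.2.val = true)).card

/-- The graph state of a simple graph on vertices `{0, …, n-1}`; vertex `j`
corresponds to the `j`-th bit of the basis-state index. -/
def graphState {n : ℕ} (G : SimpleGraph (Fin n)) : Fin (2 ^ n) → ℂ :=
  fun x => (-1 : ℂ) ^ edgeCount G (x : ℕ) / Real.sqrt (2 ^ n)

/-- The subfunction of `f` of order `ℓ` obtained by fixing the first `ℓ`
arguments to `a`. -/
def subfun {N : ℕ} (f : (Fin N → Bool) → ℂ) (ℓ : ℕ) (a : Fin ℓ → Bool) :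
    (Fin (N - ℓ) → Bool) → ℂ := fun x =>
  f (fun i => if h : (i : ℕ) < ℓ then a ⟨i, h⟩
      else x ⟨(i : ℕ) - ℓ, by have := i.isLt; omega⟩)

/-- A strong matching: a set of pairwise vertex-disjoint edges of `G` such that
every edge of `G` with both endpoints among the matched vertices is in `M`. -/
def IsStrongMatching {V : Type*} (G : SimpleGraph V) (M : Set (Sym2 V)) : Prop :=
  M ⊆ G.edgeSet ∧
  (∀ e₁ ∈ M, ∀ e₂ ∈ M, e₁ ≠ e₂ → ∀ v, v ∈ e₁ → v ∉ e₂) ∧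
  (∀ e ∈ G.edgeSet, (∀ v ∈ e, ∃ e' ∈ M, v ∈ e') → e ∈ M)

/-- An `(S,T)`-strong matching: a strong matching each of whose edges has one
endpoint in `S` and the other in `T`. -/
def IsSTStrongMatching {V : Type*} (G : SimpleGraph V) (S T : Set V) (M : Set (Sym2 V)) : Prop :=
  IsStrongMatching G M ∧ ∀ e ∈ M, ∃ u ∈ S, ∃ w ∈ T, e = s(u, w)

/-- The `n × n` grid graph. -/
def gridGraph (n : ℕ) : SimpleGraph (Fin n × Fin n) :=
  SimpleGraph.fromRel (fun u v =>
    (u.1 = v.1 ∧ (u.2 : ℕ) + 1 = (v.2 : ℕ)) ∨ (u.2 = v.2 ∧ (u.1 : ℕ) + 1 = (v.1 : ℕ)))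

/-- The amplitude function of the graph state of `G`, on assignments `V → Bool`. -/
def ampGraphState {V : Type*} [Fintype V] (G : SimpleGraph V) (x : V → Bool) : ℂ :=
  (-1 : ℂ) ^ Set.ncard {e ∈ G.edgeSet | ∀ v ∈ e, x v = true} / Real.sqrt (2 ^ Fintype.card V)

open Classical in
/-- The coset state of `C ⊆ {0,…,2^n − 1}`: the uniform superposition over `C`. -/
def cosetState (n : ℕ) (C : Set ℕ) : Fin (2 ^ n) → ℂ :=
  fun x => if (x : ℕ) ∈ C then 1 / Real.sqrt (C.ncard) else 0


/-- `X^{a_m} ⊗ ⋯ ⊗ X^{a_1}` (the `j`-th tensor factor is `X` iff `a j = true`). -/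
def xString : (m : ℕ) → (Fin m → Bool) → Matrix (Fin (2 ^ m)) (Fin (2 ^ m)) ℂ
  | 0, _ => 1
  | m + 1, a => kron (if a (Fin.last m) then pauliX else 1) (xString m (fun j => a j.castSucc))

/-!
Two Pauli LIMs commute up to sign, and the square of a Pauli LIM is a scalar. If `x = c • y` and
both `x` and `y` fix a nonzero vector `φ`, then `c = 1`; hence the elements of `Stab φ` commute and
square to `1`, and so do the elements of the group they generate. Consequently each element of
`⟨Stab φ₀ ∪ Stab φ₁⟩` is `±(a * b)` with `a ^ 2 = b ^ 2 = 1`. If such an element is a scalar `c`,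
then `c * b = ±a`, and squaring gives `c ^ 2 = 1`.
-/

/-- Commuting or anticommuting, the relation between any two Pauli strings. It asks only for a
multiplication and a negation, so that it makes sense both for matrices and for their units. -/
def CommuteUpToSign {M : Type*} [Mul M] [Neg M] (a b : M) : Prop :=
  a * b = b * a ∨ a * b = -(b * a)

namespace CommuteUpToSign

lemma symm {M : Type*} [Mul M] [InvolutiveNeg M] {a b : M} (h : CommuteUpToSign a b) :
    CommuteUpToSign b a :=
  h.imp Eq.symm fun h ↦ by rw [h, neg_neg]

lemma one_left {M : Type*} [MulOneClass M] [Neg M] (a : M) : CommuteUpToSign 1 a :=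
  .inl (by rw [one_mul, mul_one])

lemma mul_left {M : Type*} [Semigroup M] [HasDistribNeg M] {a b c : M}
    (ha : CommuteUpToSign a c) (hb : CommuteUpToSign b c) : CommuteUpToSign (a * b) c := by
  unfold CommuteUpToSign
  rcases ha with ha | ha <;> rcases hb with hb | hb <;>
    simp [mul_assoc, hb, ← mul_assoc a c b, ha]

lemma smul {K A : Type*} [CommMonoid K] [NonUnitalNonAssocRing A] [DistribMulAction K A]
    [IsScalarTower K A A] [SMulCommClass K A A] {a b : A} (h : CommuteUpToSign a b) (c d : K) :
    CommuteUpToSign (c • a) (d • b) := by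
  unfold CommuteUpToSign
  rw [smul_mul_smul_comm, smul_mul_smul_comm, mul_comm d c, ← smul_neg]
  exact h.imp (congrArg _) (congrArg _)

lemma units_of_val {M : Type*} [Monoid M] [HasDistribNeg M] {u v : Mˣ}
    (h : CommuteUpToSign (u : M) v) : CommuteUpToSign u v :=
  h.imp (fun h ↦ Units.ext h) fun h ↦ Units.ext h

section Group

variable {G : Type*} [Group G] [HasDistribNeg G]

lemma inv_left {a b : G} (h : CommuteUpToSign a b) : CommuteUpToSign a⁻¹ b := by
  refine h.imp (fun h ↦ (Commute.inv_left h).eq) fun h ↦ ?_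
  rw [inv_mul_eq_iff_eq_mul, mul_neg, ← mul_assoc, h, neg_mul, neg_neg, mul_inv_cancel_right]

lemma of_mem_closure_left {S : Set G} {a b : G} (hS : ∀ x ∈ S, CommuteUpToSign x b)
    (ha : a ∈ Subgroup.closure S) : CommuteUpToSign a b := by
  induction ha using Subgroup.closure_induction with
  | mem x hx => exact hS x hx
  | one => exact one_left b
  | mul x y _ _ hx hy => exact hx.mul_left hy
  | inv x _ hx => exact hx.inv_left

lemma of_mem_closure {S T : Set G} {a b : G} (hST : ∀ x ∈ S, ∀ y ∈ T, CommuteUpToSign x y)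
    (ha : a ∈ Subgroup.closure S) (hb : b ∈ Subgroup.closure T) : CommuteUpToSign a b :=
  of_mem_closure_left
    (fun x hx ↦ (of_mem_closure_left (fun y hy ↦ (hST x hx y hy).symm) hb).symm) ha

end Group

end CommuteUpToSign

section Group

variable {G : Type*} [Group G] [HasDistribNeg G]

lemma exists_eq_mul_or_eq_neg_mul_of_mem_sup {H K : Subgroup G}
    (hHK : ∀ a ∈ H, ∀ b ∈ K, CommuteUpToSign a b) {u : G} (hu : u ∈ H ⊔ K) :
    ∃ a ∈ H, ∃ b ∈ K, u = a * b ∨ u = -(a * b) := by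
  have mul_left {x y : G} (hx : x ∈ H ∨ x ∈ K)
      (hy : ∃ a ∈ H, ∃ b ∈ K, y = a * b ∨ y = -(a * b)) :
      ∃ a ∈ H, ∃ b ∈ K, x * y = a * b ∨ x * y = -(a * b) := by
    obtain ⟨a, ha, b, hb, hy⟩ := hy
    rcases hx with hx | hx
    · exact ⟨x * a, mul_mem hx ha, b, hb, by rcases hy with rfl | rfl <;> simp [mul_assoc]⟩
    · refine ⟨a, ha, x * b, mul_mem hx hb, ?_⟩
      rcases (hHK a ha x hx).symm with hxa | hxa <;> rcases hy with rfl | rfl <;>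
        simp [← mul_assoc, hxa]
  rw [Subgroup.sup_eq_closure] at hu
  induction hu using Subgroup.closure_induction_left with
  | one => exact ⟨1, one_mem H, 1, one_mem K, .inl (mul_one 1).symm⟩
  | mul_left x hx y _ hy => exact mul_left hx hy
  | inv_mul_cancel x hx y _ hy => exact mul_left (hx.imp inv_mem inv_mem) hy

lemma sq_eq_one_of_mem_sup {H K : Subgroup G} (hHK : ∀ a ∈ H, ∀ b ∈ K, CommuteUpToSign a b)
    (hH : ∀ a ∈ H, a ^ 2 = 1) (hK : ∀ b ∈ K, b ^ 2 = 1) {u : G} (hu : u ∈ H ⊔ K)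
    (huK : ∀ b ∈ K, Commute u b) : u ^ 2 = 1 := by
  obtain ⟨a, ha, b, hb, hab⟩ := exists_eq_mul_or_eq_neg_mul_of_mem_sup hHK hu
  have hub : u * b = a ∨ u * b = -a := by
    have hbb : b * b = 1 := by rw [← sq, hK b hb]
    exact hab.imp (fun h ↦ by rw [h, mul_assoc, hbb, mul_one])
      fun h ↦ by rw [h, neg_mul, mul_assoc, hbb, mul_one]
  calc
    u ^ 2 = (u * b) ^ 2 := by rw [(huK b hb).mul_pow, hK b hb, mul_one]
    _ = a ^ 2 := by rcases hub with h | h <;> simp only [h, neg_sq]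
    _ = 1 := hH a ha

end Group

lemma pow_eq_one_of_mem_closure {G : Type*} [Group G] {S : Set G} {n : ℕ}
    (hcomm : ∀ x ∈ S, ∀ y ∈ S, Commute x y) (hS : ∀ x ∈ S, x ^ n = 1) {u : G}
    (hu : u ∈ Subgroup.closure S) : u ^ n = 1 := by
  have := Subgroup.isMulCommutative_closure hcomm
  induction hu using Subgroup.closure_induction with
  | mem x hx => exact hS x hx
  | one => exact one_pow n
  | mul x y hx hy ihx ihy =>
    have hxy : Commute x y := setLike_mul_comm hx hy
    rw [hxy.mul_pow, ihx, ihy, one_mul]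
  | inv x _ ih => rw [inv_pow, ih, inv_one]

section Stabilizer

variable {K A V : Type*} [CommRing K] [IsDomain K] [Ring A] [Algebra K A] [AddCommGroup V]
  [Module K V] [Module.IsTorsionFree K V] [Module A V] [IsScalarTower K A V] {φ : V}

lemma eq_one_of_eq_smul (hφ : φ ≠ 0) {x y : A} {c : K} (hx : x • φ = φ) (hy : y • φ = φ)
    (hxy : x = c • y) : c = 1 :=
  smul_left_injective K hφ <| by
    change c • φ = (1 : K) • φ
    calc
      c • φ = c • y • φ := by rw [hy]
      _ = x • φ := by rw [hxy, smul_assoc]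
      _ = (1 : K) • φ := by rw [hx, one_smul]

lemma commute_of_mul_eq_smul_mul (hφ : φ ≠ 0) {x y : A} {c : K} (hx : x • φ = φ)
    (hy : y • φ = φ) (hxy : x * y = c • (y * x)) : Commute x y := by
  have hc : c = 1 :=
    eq_one_of_eq_smul hφ (by rw [mul_smul, hy, hx]) (by rw [mul_smul, hx, hy]) hxy
  rwa [hc, one_smul] at hxy

lemma sq_eq_one_of_sq_eq_smul_one (hφ : φ ≠ 0) {x : A} {c : K} (hx : x • φ = φ)
    (hsq : x ^ 2 = c • 1) : x ^ 2 = 1 := by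
  have hfix : x ^ 2 • φ = φ := by rw [sq, mul_smul, hx, hx]
  rw [hsq, eq_one_of_eq_smul hφ hfix (one_smul A φ) hsq, one_smul]

/-- The units of `A` that lie in `S` and fix `φ`. For `S` the set of Pauli LIMs this is `Stab φ`,
viewed inside the group of invertible matrices. -/
def unitStab (S : Set A) (φ : V) : Set Aˣ :=
  {u | (u : A) ∈ S ∧ (u : A) • φ = φ}

variable {S : Set A} {φ₀ φ₁ : V}

lemma sq_eq_one_of_mem_closure_unitStab (hsq : ∀ a ∈ S, ∃ c : K, a ^ 2 = c • 1)
    (hcomm : ∀ a ∈ S, ∀ b ∈ S, CommuteUpToSign a b) (hφ : φ ≠ 0) {u : Aˣ}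
    (hu : u ∈ Subgroup.closure (unitStab S φ)) : u ^ 2 = 1 := by
  refine pow_eq_one_of_mem_closure (fun x hx y hy ↦ ?_) (fun x hx ↦ ?_) hu
  · refine Units.ext ?_
    rcases hcomm _ hx.1 _ hy.1 with h | h
    · exact h
    · exact commute_of_mul_eq_smul_mul hφ hx.2 hy.2 (c := (-1 : K)) (by rw [h, neg_one_smul])
  · obtain ⟨c, hc⟩ := hsq _ hx.1
    exact Units.ext (sq_eq_one_of_sq_eq_smul_one hφ hx.2 hc)

lemma eq_one_or_eq_neg_one_of_mem_closure_unitStab (hsq : ∀ a ∈ S, ∃ c : K, a ^ 2 = c • 1)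
    (hcomm : ∀ a ∈ S, ∀ b ∈ S, CommuteUpToSign a b) (h₀ : φ₀ ≠ 0) (h₁ : φ₁ ≠ 0) {u : Aˣ} {c : K}
    (hu : u ∈ Subgroup.closure (unitStab S φ₀ ∪ unitStab S φ₁)) (huc : (u : A) = c • 1) :
    c = 1 ∨ c = -1 := by
  have hu_sq : u ^ 2 = 1 := by
    rw [Subgroup.closure_union] at hu
    refine sq_eq_one_of_mem_sup (fun a ha b hb ↦ ?_)
      (fun a ↦ sq_eq_one_of_mem_closure_unitStab hsq hcomm h₀)
      (fun b ↦ sq_eq_one_of_mem_closure_unitStab hsq hcomm h₁) hu (fun b _ ↦ Units.ext ?_)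
    · exact .of_mem_closure (fun x hx y hy ↦ .units_of_val (hcomm _ hx.1 _ hy.1)) ha hb
    · simp [huc]
  have hc : 1 = c ^ 2 • (1 : A) :=
    calc
      (1 : A) = (u : A) ^ 2 := by rw [← Units.val_pow_eq_pow_val, hu_sq, Units.val_one]
      _ = c ^ 2 • 1 := by rw [huc, smul_pow, one_pow]
  rw [← sq_eq_one_iff]
  exact eq_one_of_eq_smul h₀ (one_smul A φ₀) (one_smul A φ₀) hc

end Stabilizer

theorem scalar_pm_one_in_generated_group_general {K A V : Type*} [Field K] [Ring A] [Algebra K A]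
    [AddCommGroup V] [Module K V] [Module A V] [IsScalarTower K A V] {S : Set A} {φ₀ φ₁ : V}
    (hsq : ∀ a ∈ S, ∃ c : K, a ^ 2 = c • 1) (hcomm : ∀ a ∈ S, ∀ b ∈ S, CommuteUpToSign a b)
    (h₀ : φ₀ ≠ 0) (h₁ : φ₁ ≠ 0) {R : A} {ν ν' : K}
    (h : ∃ u ∈ Subgroup.closure (unitStab S φ₀ ∪ unitStab S φ₁), (u : A) = ν • R)
    (h' : ∃ u ∈ Subgroup.closure (unitStab S φ₀ ∪ unitStab S φ₁), (u : A) = ν' • R) :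
    ν = ν' ∨ ν = -ν' := by
  obtain ⟨u, hu, huR⟩ := h
  obtain ⟨v, hv, hvR⟩ := h'
  have : Nontrivial V := nontrivial_of_ne φ₀ 0 h₀
  have : Nontrivial A := Module.nontrivial A V
  have hν' : ν' ≠ 0 := by
    rintro rfl
    exact v.ne_zero (by rw [hvR, zero_smul])
  have huv : ((u * v⁻¹ : Aˣ) : A) = (ν / ν') • 1 := by
    rw [Units.val_mul, ← Units.mul_inv v, ← smul_mul_assoc, hvR, smul_smul,
      div_mul_cancel₀ ν hν', huR]
  have hratio : ν / ν' = 1 ∨ ν / ν' = -1 :=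
    eq_one_or_eq_neg_one_of_mem_closure_unitStab hsq hcomm h₀ h₁ (mul_mem hu (inv_mem hv)) huv
  rwa [div_eq_one_iff_eq hν', div_eq_iff hν', neg_one_mul] at hratio

section Kronecker

variable {m : ℕ}

/-- The splitting of a computational basis index into its most significant bit and the remaining
`m` bits, along which `kron` becomes the Kronecker product of Mathlib. -/
def msbEquiv (m : ℕ) : Fin (2 ^ (m + 1)) ≃ Fin 2 × Fin (2 ^ m) :=
  (finCongr (pow_succ' 2 m)).trans finProdFinEquiv.symm

lemma msbEquiv_apply (i : Fin (2 ^ (m + 1))) :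
    msbEquiv m i = (if (i : ℕ) < 2 ^ m then 0 else 1,
      ⟨(i : ℕ) % 2 ^ m, Nat.mod_lt _ (pow_pos (by norm_num) m)⟩) := by
  have hi : (i : ℕ) < 2 * 2 ^ m := pow_succ' 2 m ▸ i.isLt
  refine Prod.ext (Fin.ext ?_) rfl
  change (i : ℕ) / 2 ^ m = _
  split_ifs with h
  · exact Nat.div_eq_of_lt h
  · exact Nat.div_eq_of_lt_le (by simpa using h) (by simpa using hi)

open scoped Kronecker in
lemma kron_eq_submatrix_kronecker (A : Matrix (Fin 2) (Fin 2) ℂ)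
    (B : Matrix (Fin (2 ^ m)) (Fin (2 ^ m)) ℂ) :
    kron A B = (A ⊗ₖ B).submatrix (msbEquiv m) (msbEquiv m) := by
  ext i j
  rw [submatrix_apply, msbEquiv_apply, msbEquiv_apply, kronecker_apply, kron]

lemma kron_mul_kron (A C : Matrix (Fin 2) (Fin 2) ℂ) (B D : Matrix (Fin (2 ^ m)) (Fin (2 ^ m)) ℂ) :
    kron A B * kron C D = kron (A * C) (B * D) := by
  simp only [kron_eq_submatrix_kronecker, submatrix_mul_equiv, mul_kronecker_mul]

lemma kron_one_one : kron 1 (1 : Matrix (Fin (2 ^ m)) (Fin (2 ^ m)) ℂ) = 1 := by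
  rw [kron_eq_submatrix_kronecker, one_kronecker_one, submatrix_one_equiv]

lemma neg_kron (A : Matrix (Fin 2) (Fin 2) ℂ) (B : Matrix (Fin (2 ^ m)) (Fin (2 ^ m)) ℂ) :
    kron (-A) B = -kron A B := by
  ext i j
  exact neg_mul _ _

lemma kron_neg (A : Matrix (Fin 2) (Fin 2) ℂ) (B : Matrix (Fin (2 ^ m)) (Fin (2 ^ m)) ℂ) :
    kron A (-B) = -kron A B := by
  ext i j
  exact mul_neg _ _

lemma CommuteUpToSign.kron {A C : Matrix (Fin 2) (Fin 2) ℂ}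
    {B D : Matrix (Fin (2 ^ m)) (Fin (2 ^ m)) ℂ} (hAC : CommuteUpToSign A C)
    (hBD : CommuteUpToSign B D) : CommuteUpToSign (kron A B) (kron C D) := by
  unfold CommuteUpToSign
  rw [kron_mul_kron, kron_mul_kron]
  rcases hAC with hAC | hAC <;> rcases hBD with hBD | hBD <;>
    simp [hAC, hBD, neg_kron, kron_neg]

end Kronecker

section Pauli

lemma pauliX_mul_pauliY : pauliX * pauliY = -(pauliY * pauliX) := by
  simp [pauliX, pauliY]

lemma pauliX_mul_pauliZ : pauliX * pauliZ = -(pauliZ * pauliX) := by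
  simp [pauliX, pauliZ]

lemma pauliY_mul_pauliZ : pauliY * pauliZ = -(pauliZ * pauliY) := by
  simp [pauliY, pauliZ]

variable {P Q : Matrix (Fin 2) (Fin 2) ℂ}

lemma sq_eq_one_of_mem_pauli
    (hP : P ∈ ({pauliI, pauliX, pauliY, pauliZ} : Set (Matrix (Fin 2) (Fin 2) ℂ))) :
    P ^ 2 = 1 := by
  rcases hP with rfl | rfl | rfl | rfl <;>
    simp [sq, pauliI, pauliX, pauliY, pauliZ, one_fin_two]

lemma commuteUpToSign_of_mem_pauli
    (hP : P ∈ ({pauliI, pauliX, pauliY, pauliZ} : Set (Matrix (Fin 2) (Fin 2) ℂ)))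
    (hQ : Q ∈ ({pauliI, pauliX, pauliY, pauliZ} : Set (Matrix (Fin 2) (Fin 2) ℂ))) :
    CommuteUpToSign P Q := by
  rcases hP with rfl | rfl | rfl | rfl <;> rcases hQ with rfl | rfl | rfl | rfl <;>
    simp [CommuteUpToSign, pauliI, pauliX_mul_pauliY, pauliX_mul_pauliZ, pauliY_mul_pauliZ]

end Pauli

lemma IsPauliString.sq_eq_one :
    ∀ {n : ℕ} {P : Matrix (Fin (2 ^ n)) (Fin (2 ^ n)) ℂ}, IsPauliString n P → P ^ 2 = 1
  | 0, _, rfl => one_pow 2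
  | _ + 1, _, ⟨Q, hQ, B, hB, rfl⟩ => by
    rw [sq, kron_mul_kron, ← sq, ← sq, sq_eq_one_of_mem_pauli hQ, hB.sq_eq_one, kron_one_one]

lemma IsPauliString.commuteUpToSign : ∀ {n : ℕ} {P Q : Matrix (Fin (2 ^ n)) (Fin (2 ^ n)) ℂ},
    IsPauliString n P → IsPauliString n Q → CommuteUpToSign P Q
  | 0, _, Q, rfl, _ => .one_left Q
  | _ + 1, _, _, ⟨_, hA, _, hB, rfl⟩, ⟨_, hC, _, hD, rfl⟩ =>
    (commuteUpToSign_of_mem_pauli hA hC).kron (hB.commuteUpToSign hD)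

lemma IsPauliLIM.exists_sq_eq_smul_one {n : ℕ} {A : Matrix (Fin (2 ^ n)) (Fin (2 ^ n)) ℂ}
    (hA : IsPauliLIM n A) : ∃ c : ℂ, A ^ 2 = c • 1 := by
  obtain ⟨c, P, -, hP, rfl⟩ := hA
  exact ⟨c ^ 2, by rw [smul_pow, hP.sq_eq_one]⟩

lemma IsPauliLIM.commuteUpToSign {n : ℕ} {A B : Matrix (Fin (2 ^ n)) (Fin (2 ^ n)) ℂ}
    (hA : IsPauliLIM n A) (hB : IsPauliLIM n B) : CommuteUpToSign A B := by
  obtain ⟨c, P, -, hP, rfl⟩ := hA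
  obtain ⟨d, Q, -, hQ, rfl⟩ := hB
  exact (hP.commuteUpToSign hQ).smul c d

/-- If `νR` and `ν′R` both lie in the group generated by `Stab(φ₀) ∪ Stab(φ₁)`,
then `ν = ±ν′`. -/
theorem scalar_pm_one_in_generated_group (n : ℕ) (φ₀ φ₁ : Fin (2 ^ n) → ℂ)
    (h₀ : φ₀ ≠ 0) (h₁ : φ₁ ≠ 0)
    (R : Matrix (Fin (2 ^ n)) (Fin (2 ^ n)) ℂ) (hR : IsPauliString n R)
    (ν ν' : ℂ) (hν : ν ≠ 0) (hν' : ν' ≠ 0)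
    (h : ∃ u ∈ Subgroup.closure {u : (Matrix (Fin (2 ^ n)) (Fin (2 ^ n)) ℂ)ˣ |
        (u : Matrix (Fin (2 ^ n)) (Fin (2 ^ n)) ℂ) ∈ PauliStab φ₀ ∪ PauliStab φ₁},
        (u : Matrix (Fin (2 ^ n)) (Fin (2 ^ n)) ℂ) = ν • R)
    (h' : ∃ u ∈ Subgroup.closure {u : (Matrix (Fin (2 ^ n)) (Fin (2 ^ n)) ℂ)ˣ |
        (u : Matrix (Fin (2 ^ n)) (Fin (2 ^ n)) ℂ) ∈ PauliStab φ₀ ∪ PauliStab φ₁},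
        (u : Matrix (Fin (2 ^ n)) (Fin (2 ^ n)) ℂ) = ν' • R) :
    ν = ν' ∨ ν = -ν' :=
  scalar_pm_one_in_generated_group_general (S := {A | IsPauliLIM n A})
    (fun _ hA ↦ hA.exists_sq_eq_smul_one) (fun _ hA _ hB ↦ hA.commuteUpToSign hB) h₀ h₁ h h'

end
end

section
/- Let n ≥ 2, let ψ₀ be an (n−1)-qubit stabilizer state, let P be an (n−1)-qubit Pauli string, and let λ ∈ {1, −1, i, −i}. Then the unit vector (1/√2)·(|0⟩⊗ψ₀ + λ·|1⟩⊗Pψ₀) is an n-qubit stabilizer state. -/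
open Matrix

noncomputable section

/-! The state `(|0⟩ ⊗ ψ₀ + |1⟩ ⊗ U ψ₀) / √2` is the image of `|+⟩ ⊗ ψ₀` under the controlled-`U`
gate. For `U` in the Pauli group this gate is Clifford: it is unitary, and since Paulis commute up
to sign and `Uᴴ = ± U`, conjugation by it preserves the Pauli group. Clifford gates map stabilizer
states to stabilizer states because conjugation by `C` carries the stabilizer of `φ` onto that of
`C φ`. Finally, `|+⟩ ⊗ ψ₀` is a stabilizer state: its stabilizer is `{I, X} ⊗ Stab ψ₀`. -/

lemma units_int_mul_self_mul (e f : ℤˣ) : e * (e * f) = f := by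
  rw [← mul_assoc, Int.units_mul_self, one_mul]

lemma star_units_int (e : ℤˣ) : star e = e :=
  Units.ext (star_trivial (e : ℤ))

lemma ofReal_sum_normSq {ι : Type*} [Fintype ι] (v : ι → ℂ) :
    ((∑ i, Complex.normSq (v i) : ℝ) : ℂ) = star v ⬝ᵥ v := by
  simp [dotProduct, Complex.normSq_eq_conj_mul_self]

lemma sum_normSq_mulVec_of_mem_unitaryGroup {ι : Type*} [Fintype ι] [DecidableEq ι]
    {U : Matrix ι ι ℂ} (hU : U ∈ unitaryGroup ι ℂ) (v : ι → ℂ) :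
    ∑ i, Complex.normSq ((U *ᵥ v) i) = ∑ i, Complex.normSq (v i) := by
  rw [← Complex.ofReal_inj, ofReal_sum_normSq, ofReal_sum_normSq, star_mulVec,
    dotProduct_mulVec, vecMul_vecMul, ← star_eq_conjTranspose, mem_unitaryGroup_iff'.1 hU,
    vecMul_one]

section Blocks

variable {m : ℕ}

/-- Splits the basis indices of `m + 1` qubits according to the most significant qubit: the left
summand has it equal to `0`, the right summand equal to `1`. -/
def leadingQubitEquiv (m : ℕ) : Fin (2 ^ m) ⊕ Fin (2 ^ m) ≃ Fin (2 ^ (m + 1)) :=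
  finSumFinEquiv.trans (finCongr (Nat.two_pow_succ m).symm)

lemma val_leadingQubitEquiv_inl (i : Fin (2 ^ m)) : (leadingQubitEquiv m (.inl i) : ℕ) = i := by
  simp [leadingQubitEquiv]

lemma val_leadingQubitEquiv_inr (i : Fin (2 ^ m)) :
    (leadingQubitEquiv m (.inr i) : ℕ) = 2 ^ m + i := by
  simp [leadingQubitEquiv, add_comm]

/-- `Matrix.fromBlocks` for operators on `m + 1` qubits: the operator
`|0⟩⟨0| ⊗ A + |0⟩⟨1| ⊗ B + |1⟩⟨0| ⊗ C + |1⟩⟨1| ⊗ D`. -/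
def qubitBlocks (A B C D : Matrix (Fin (2 ^ m)) (Fin (2 ^ m)) ℂ) :
    Matrix (Fin (2 ^ (m + 1))) (Fin (2 ^ (m + 1))) ℂ :=
  reindex (leadingQubitEquiv m) (leadingQubitEquiv m) (fromBlocks A B C D)

variable {A B C D A' B' C' D' : Matrix (Fin (2 ^ m)) (Fin (2 ^ m)) ℂ}

lemma qubitBlocks_inj :
    qubitBlocks A B C D = qubitBlocks A' B' C' D' ↔ A = A' ∧ B = B' ∧ C = C' ∧ D = D' := by
  rw [qubitBlocks, qubitBlocks, (reindex _ _).injective.eq_iff, fromBlocks_inj]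

lemma qubitBlocks_mul : qubitBlocks A B C D * qubitBlocks A' B' C' D' =
    qubitBlocks (A * A' + B * C') (A * B' + B * D') (C * A' + D * C') (C * B' + D * D') := by
  simp [qubitBlocks, submatrix_mul_equiv, fromBlocks_multiply]

lemma smul_qubitBlocks {R : Type*} [SMul R ℂ] (c : R) :
    c • qubitBlocks A B C D = qubitBlocks (c • A) (c • B) (c • C) (c • D) := by
  rw [qubitBlocks, qubitBlocks, ← fromBlocks_smul]
  rfl

lemma qubitBlocks_one : qubitBlocks (1 : Matrix (Fin (2 ^ m)) (Fin (2 ^ m)) ℂ) 0 0 1 = 1 := by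
  simp [qubitBlocks]

lemma conjTranspose_qubitBlocks : (qubitBlocks A B C D)ᴴ = qubitBlocks Aᴴ Cᴴ Bᴴ Dᴴ := by
  simp [qubitBlocks, fromBlocks_conjTranspose]

lemma kron_eq_qubitBlocks (Q : Matrix (Fin 2) (Fin 2) ℂ) :
    kron Q A = qubitBlocks (Q 0 0 • A) (Q 0 1 • A) (Q 1 0 • A) (Q 1 1 • A) := by
  rw [qubitBlocks, ← Equiv.symm_apply_eq]
  ext (i | i) (j | j) <;>
    simp [kron, val_leadingQubitEquiv_inl, val_leadingQubitEquiv_inr, Nat.mod_eq_of_lt]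

variable {a b a' b' : Fin (2 ^ m) → ℂ}

lemma dirac_comp_leadingQubitEquiv : dirac a b ∘ leadingQubitEquiv m = Sum.elim a b := by
  ext (i | i) <;> simp [dirac, val_leadingQubitEquiv_inl, val_leadingQubitEquiv_inr]

lemma dirac_eq_sumElim_comp : dirac a b = Sum.elim a b ∘ (leadingQubitEquiv m).symm := by
  rw [Equiv.eq_comp_symm, dirac_comp_leadingQubitEquiv]

lemma dirac_inj : dirac a b = dirac a' b' ↔ a = a' ∧ b = b' := by
  rw [dirac_eq_sumElim_comp, dirac_eq_sumElim_comp,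
    (leadingQubitEquiv m).symm.surjective.injective_comp_right.eq_iff, Sum.elim_eq_iff]

lemma qubitBlocks_mulVec_dirac :
    qubitBlocks A B C D *ᵥ dirac a b = dirac (A *ᵥ a + B *ᵥ b) (C *ᵥ a + D *ᵥ b) := by
  rw [dirac_eq_sumElim_comp, dirac_eq_sumElim_comp, qubitBlocks, reindex_apply,
    submatrix_mulVec_equiv, Equiv.symm_symm, Function.comp_assoc, Equiv.symm_comp_self,
    Function.comp_id, fromBlocks_mulVec, Sum.elim_comp_inl, Sum.elim_comp_inr]

lemma sum_normSq_dirac : ∑ i, Complex.normSq (dirac a b i) =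
    ∑ i, Complex.normSq (a i) + ∑ i, Complex.normSq (b i) := by
  simp [dirac_eq_sumElim_comp, ← (leadingQubitEquiv m).sum_comp]

end Blocks

section PauliGroup

variable {m : ℕ} {A B : Matrix (Fin (2 ^ m)) (Fin (2 ^ m)) ℂ}

lemma inPauliGroup_iff_exists_pow_four_eq_one :
    InPauliGroup m A ↔ ∃ c : ℂ, c ^ 4 = 1 ∧ ∃ P, IsPauliString m P ∧ A = c • P := by
  constructor
  · rintro ⟨k, P, hP, rfl⟩
    exact ⟨_, by rw [← pow_mul', pow_mul, Complex.I_pow_four, one_pow], P, hP, rfl⟩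
  · rintro ⟨c, hc, P, hP, rfl⟩
    obtain ⟨k, hk, rfl⟩ := Complex.isPrimitiveRoot_I.eq_pow_of_pow_eq_one hc
    exact ⟨⟨k, hk⟩, P, hP, rfl⟩

lemma inPauliGroup_zero_iff {A : Matrix (Fin (2 ^ 0)) (Fin (2 ^ 0)) ℂ} :
    InPauliGroup 0 A ↔ ∃ c : ℂ, c ^ 4 = 1 ∧ A = c • 1 := by
  simp [inPauliGroup_iff_exists_pow_four_eq_one, IsPauliString]

lemma InPauliGroup.smul {c : ℂ} (hA : InPauliGroup m A) (hc : c ^ 4 = 1) :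
    InPauliGroup m (c • A) := by
  rw [inPauliGroup_iff_exists_pow_four_eq_one] at hA ⊢
  obtain ⟨d, hd, P, hP, rfl⟩ := hA
  exact ⟨c * d, by rw [mul_pow, hc, hd, one_mul], P, hP, smul_smul c d P⟩

lemma InPauliGroup.units_smul (hA : InPauliGroup m A) (e : ℤˣ) :
    InPauliGroup m (e • A) := by
  rcases Int.units_eq_one_or e with rfl | rfl
  · rwa [one_smul]
  · simpa using hA.smul (c := -1) (by norm_num)

lemma IsPauliString.inPauliGroup_smul {P : Matrix (Fin (2 ^ m)) (Fin (2 ^ m)) ℂ} {c : ℂ}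
    (hP : IsPauliString m P) (hc : c ^ 4 = 1) : InPauliGroup m (c • P) :=
  inPauliGroup_iff_exists_pow_four_eq_one.2 ⟨c, hc, P, hP, rfl⟩

lemma InPauliGroup.exists_eq_qubitBlocks {M : Matrix (Fin (2 ^ (m + 1))) (Fin (2 ^ (m + 1))) ℂ}
    (hM : InPauliGroup (m + 1) M) : ∃ A, InPauliGroup m A ∧ ∃ e : ℤˣ,
      M = qubitBlocks A 0 0 (e • A) ∨ M = qubitBlocks 0 A (e • A) 0 := by
  obtain ⟨c, hc, _, ⟨Q, hQ, B, hB, rfl⟩, rfl⟩ := inPauliGroup_iff_exists_pow_four_eq_one.1 hM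
  rcases hQ with rfl | rfl | rfl | rfl
  · exact ⟨c • B, hB.inPauliGroup_smul hc, 1, .inl <| by
      simp [kron_eq_qubitBlocks, smul_qubitBlocks, pauliI]⟩
  · exact ⟨c • B, hB.inPauliGroup_smul hc, 1, .inr <| by
      simp [kron_eq_qubitBlocks, smul_qubitBlocks, pauliX]⟩
  · exact ⟨(c * -Complex.I) • B, hB.inPauliGroup_smul
      (by rw [mul_pow, hc, Complex.isPrimitiveRoot_neg_I.pow_eq_one, one_mul]), -1, .inr <| by
      simp [kron_eq_qubitBlocks, smul_qubitBlocks, pauliY, smul_smul]⟩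
  · exact ⟨c • B, hB.inPauliGroup_smul hc, -1, .inl <| by
      simp [kron_eq_qubitBlocks, smul_qubitBlocks, pauliZ]⟩

lemma InPauliGroup.qubitBlocks_diag (hA : InPauliGroup m A) (e : ℤˣ) :
    InPauliGroup (m + 1) (qubitBlocks A 0 0 (e • A)) := by
  obtain ⟨c, hc, B, hB, rfl⟩ := inPauliGroup_iff_exists_pow_four_eq_one.1 hA
  rw [inPauliGroup_iff_exists_pow_four_eq_one]
  rcases Int.units_eq_one_or e with rfl | rfl
  · exact ⟨c, hc, kron pauliI B, ⟨pauliI, by simp, B, hB, rfl⟩, by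
      simp [kron_eq_qubitBlocks, smul_qubitBlocks, pauliI]⟩
  · exact ⟨c, hc, kron pauliZ B, ⟨pauliZ, by simp, B, hB, rfl⟩, by
      simp [kron_eq_qubitBlocks, smul_qubitBlocks, pauliZ]⟩

lemma InPauliGroup.qubitBlocks_antidiag (hA : InPauliGroup m A) (e : ℤˣ) :
    InPauliGroup (m + 1) (qubitBlocks 0 A (e • A) 0) := by
  obtain ⟨c, hc, B, hB, rfl⟩ := inPauliGroup_iff_exists_pow_four_eq_one.1 hA
  rw [inPauliGroup_iff_exists_pow_four_eq_one]
  rcases Int.units_eq_one_or e with rfl | rfl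
  · exact ⟨c, hc, kron pauliX B, ⟨pauliX, by simp, B, hB, rfl⟩, by
      simp [kron_eq_qubitBlocks, smul_qubitBlocks, pauliX]⟩
  · exact ⟨c * Complex.I, by simp [mul_pow, hc], kron pauliY B, ⟨pauliY, by simp, B, hB, rfl⟩, by
      simp [kron_eq_qubitBlocks, smul_qubitBlocks, pauliY, smul_smul, mul_assoc]⟩

lemma InPauliGroup.mul (hA : InPauliGroup m A) (hB : InPauliGroup m B) :
    InPauliGroup m (A * B) := by
  induction m with
  | zero =>
    obtain ⟨c, hc, rfl⟩ := inPauliGroup_zero_iff.1 hA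
    simpa using hB.smul hc
  | succ m ih =>
    obtain ⟨A', hA', e, rfl | rfl⟩ := hA.exists_eq_qubitBlocks <;>
    obtain ⟨B', hB', f, rfl | rfl⟩ := hB.exists_eq_qubitBlocks <;>
    have hAB' := ih hA' hB'
    · simpa [qubitBlocks_mul, smul_smul] using hAB'.qubitBlocks_diag (f * e)
    · simpa [qubitBlocks_mul, smul_smul] using hAB'.qubitBlocks_antidiag (f * e)
    · simpa [qubitBlocks_mul, smul_smul, mul_assoc] using
        (hAB'.units_smul f).qubitBlocks_antidiag (e * f)
    · simpa [qubitBlocks_mul, smul_smul, mul_assoc] using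
        (hAB'.units_smul f).qubitBlocks_diag (e * f)

lemma InPauliGroup.exists_mul_eq_units_smul_mul (hA : InPauliGroup m A) (hB : InPauliGroup m B) :
    ∃ s : ℤˣ, A * B = s • (B * A) := by
  induction m with
  | zero =>
    obtain ⟨c, -, rfl⟩ := inPauliGroup_zero_iff.1 hA
    exact ⟨1, by simp⟩
  | succ m ih =>
    obtain ⟨A', hA', e, rfl | rfl⟩ := hA.exists_eq_qubitBlocks <;>
    obtain ⟨B', hB', f, rfl | rfl⟩ := hB.exists_eq_qubitBlocks <;>
    obtain ⟨s, hs⟩ := ih hA' hB' <;>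
    [use s; use s * e; use s * f; use s * e * f]
    all_goals simp [qubitBlocks_mul, smul_qubitBlocks, hs, smul_smul, mul_comm, mul_left_comm,
      units_int_mul_self_mul]

lemma InPauliGroup.exists_conjTranspose_eq_units_smul (hA : InPauliGroup m A) :
    ∃ s : ℤˣ, Aᴴ = s • A := by
  induction m with
  | zero =>
    obtain ⟨k, _, rfl, rfl⟩ := hA
    fin_cases k <;> [use 1; use -1; use 1; use -1] <;> simp [Complex.I_pow_three]
  | succ m ih =>
    obtain ⟨A', hA', e, rfl | rfl⟩ := hA.exists_eq_qubitBlocks <;>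
    obtain ⟨s, hs⟩ := ih hA' <;>
    [use s; use s * e]
    all_goals simp [conjTranspose_qubitBlocks, star_units_int, smul_qubitBlocks, hs,
      smul_smul, mul_comm, units_int_mul_self_mul]

lemma InPauliGroup.conjTranspose (hA : InPauliGroup m A) : InPauliGroup m Aᴴ := by
  obtain ⟨s, hs⟩ := hA.exists_conjTranspose_eq_units_smul
  exact hs ▸ hA.units_smul s

lemma InPauliGroup.mem_unitaryGroup (hA : InPauliGroup m A) :
    A ∈ unitaryGroup (Fin (2 ^ m)) ℂ := by
  rw [mem_unitaryGroup_iff', star_eq_conjTranspose]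
  induction m with
  | zero =>
    obtain ⟨c, hc, rfl⟩ := inPauliGroup_zero_iff.1 hA
    have hnorm : ‖c‖ = 1 := Complex.norm_eq_one_of_pow_eq_one hc four_ne_zero
    simp [smul_smul, Complex.mul_conj', hnorm]
  | succ m ih =>
    obtain ⟨A', hA', e, rfl | rfl⟩ := hA.exists_eq_qubitBlocks <;>
    simp [qubitBlocks_mul, conjTranspose_qubitBlocks, star_units_int, smul_smul,
      ih hA', qubitBlocks_one]

end PauliGroup

section Clifford

variable {m n : ℕ}

/-- The stabilizer of `φ` in the Pauli group, whose cardinality `IsStabilizerState` prescribes.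
Unlike in `PauliStab`, only the scalars `±1` and `±i` are allowed. -/
def pauliStabilizer (φ : Fin (2 ^ n) → ℂ) : Set (Matrix (Fin (2 ^ n)) (Fin (2 ^ n)) ℂ) :=
  {A | InPauliGroup n A ∧ A *ᵥ φ = φ}

lemma pauliStabilizer_smul {c : ℂ} (hc : c ≠ 0) (φ : Fin (2 ^ n) → ℂ) :
    pauliStabilizer (c • φ) = pauliStabilizer φ := by
  ext A
  simp only [pauliStabilizer, Set.mem_ofPred_eq, mulVec_smul, (smul_right_injective _ hc).eq_iff]

/-- Clifford gates: the unitaries `C` with `C 𝒫 Cᴴ = 𝒫` for the Pauli group `𝒫`, the equality being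
expressed as an equivalence of memberships. -/
structure IsClifford (n : ℕ) (C : Matrix (Fin (2 ^ n)) (Fin (2 ^ n)) ℂ) : Prop where
  mem_unitaryGroup : C ∈ unitaryGroup (Fin (2 ^ n)) ℂ
  inPauliGroup_conj_iff : ∀ A, InPauliGroup n (C * A * Cᴴ) ↔ InPauliGroup n A

namespace IsClifford

variable {C : Matrix (Fin (2 ^ n)) (Fin (2 ^ n)) ℂ} {φ : Fin (2 ^ n) → ℂ}

lemma conj_mem_pauliStabilizer_iff (hC : IsClifford n C)
    (A : Matrix (Fin (2 ^ n)) (Fin (2 ^ n)) ℂ) :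
    C * A * Cᴴ ∈ pauliStabilizer (C *ᵥ φ) ↔ A ∈ pauliStabilizer φ := by
  have hCC : Cᴴ * C = 1 := mem_unitaryGroup_iff'.1 hC.mem_unitaryGroup
  have hfix : (C * A * Cᴴ) *ᵥ (C *ᵥ φ) = C *ᵥ (A *ᵥ φ) := by
    rw [mulVec_mulVec, mulVec_mulVec, mul_assoc, hCC, mul_one]
  simp only [pauliStabilizer, Set.mem_ofPred_eq, hC.inPauliGroup_conj_iff, hfix,
    (mulVec_injective_of_isUnit (.of_mul_eq_one_right _ hCC)).eq_iff]

lemma ncard_pauliStabilizer_mulVec (hC : IsClifford n C) :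
    (pauliStabilizer (C *ᵥ φ)).ncard = (pauliStabilizer φ).ncard :=
  (Nat.card_congr <| (Unitary.conjStarAlgAut ℂ _ ⟨C, hC.mem_unitaryGroup⟩).toEquiv.subtypeEquiv
    fun A ↦ (hC.conj_mem_pauliStabilizer_iff A).symm).symm

lemma isStabilizerState_mulVec (hC : IsClifford n C) (hφ : IsStabilizerState n φ) :
    IsStabilizerState n (C *ᵥ φ) :=
  ⟨(sum_normSq_mulVec_of_mem_unitaryGroup hC.mem_unitaryGroup φ).trans hφ.1,
    hC.ncard_pauliStabilizer_mulVec.trans hφ.2⟩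

end IsClifford

/-- The controlled-`U` gate `|0⟩⟨0| ⊗ 1 + |1⟩⟨1| ⊗ U`, controlled by the most significant qubit. -/
def controlled (U : Matrix (Fin (2 ^ m)) (Fin (2 ^ m)) ℂ) :
    Matrix (Fin (2 ^ (m + 1))) (Fin (2 ^ (m + 1))) ℂ :=
  qubitBlocks 1 0 0 U

variable {U : Matrix (Fin (2 ^ m)) (Fin (2 ^ m)) ℂ}

lemma conjTranspose_controlled : (controlled U)ᴴ = controlled Uᴴ := by
  simp [controlled, conjTranspose_qubitBlocks]

lemma controlled_mulVec_dirac (a b : Fin (2 ^ m) → ℂ) :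
    controlled U *ᵥ dirac a b = dirac a (U *ᵥ b) := by
  simp [controlled, qubitBlocks_mulVec_dirac]

lemma controlled_mem_unitaryGroup (hU : U ∈ unitaryGroup (Fin (2 ^ m)) ℂ) :
    controlled U ∈ unitaryGroup (Fin (2 ^ (m + 1))) ℂ := by
  have hUU : U * Uᴴ = 1 := mem_unitaryGroup_iff.1 hU
  rw [mem_unitaryGroup_iff, star_eq_conjTranspose, conjTranspose_controlled]
  simp [controlled, qubitBlocks_mul, hUU, qubitBlocks_one]

lemma InPauliGroup.controlled_conj {M : Matrix (Fin (2 ^ (m + 1))) (Fin (2 ^ (m + 1))) ℂ}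
    (hU : InPauliGroup m U) (hM : InPauliGroup (m + 1) M) :
    InPauliGroup (m + 1) (controlled U * M * (controlled U)ᴴ) := by
  rw [conjTranspose_controlled]
  obtain ⟨A, hA, e, rfl | rfl⟩ := hM.exists_eq_qubitBlocks <;>
  obtain ⟨s, hs⟩ := hU.exists_mul_eq_units_smul_mul hA
  · have hUU : U * Uᴴ = 1 := mem_unitaryGroup_iff.1 hU.mem_unitaryGroup
    simpa [controlled, qubitBlocks_mul, hs, mul_assoc, hUU, smul_smul]
      using hA.qubitBlocks_diag (e * s)
  · obtain ⟨t, ht⟩ := hU.conjTranspose.exists_conjTranspose_eq_units_smul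
    rw [conjTranspose_conjTranspose] at ht
    have hUA : U * A = (s * t) • (A * Uᴴ) :=
      calc U * A = s • (A * U) := hs
        _ = s • (A * (t • Uᴴ)) := by rw [← ht]
        _ = (s * t) • (A * Uᴴ) := by rw [mul_smul_comm, smul_smul]
    simpa [controlled, qubitBlocks_mul, hUA, smul_smul]
      using (hA.mul hU.conjTranspose).qubitBlocks_antidiag (e * (s * t))

lemma InPauliGroup.isClifford_controlled (hU : InPauliGroup m U) :
    IsClifford (m + 1) (controlled U) where
  mem_unitaryGroup := controlled_mem_unitaryGroup hU.mem_unitaryGroup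
  inPauliGroup_conj_iff M := by
    refine ⟨fun h ↦ ?_, hU.controlled_conj⟩
    have hCC : (controlled U)ᴴ * controlled U = 1 :=
      mem_unitaryGroup_iff'.1 (controlled_mem_unitaryGroup hU.mem_unitaryGroup)
    have hconj := hU.conjTranspose.controlled_conj h
    rwa [← conjTranspose_controlled, conjTranspose_conjTranspose, mul_assoc, mul_assoc, hCC,
      mul_one, ← mul_assoc, hCC, one_mul] at hconj

end Clifford

section PlusState

variable {m : ℕ} {ψ : Fin (2 ^ m) → ℂ}

lemma pauliStabilizer_dirac_self (hψ : ψ ≠ 0) :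
    pauliStabilizer (dirac ψ ψ) =
      (fun A ↦ qubitBlocks A 0 0 A) '' pauliStabilizer ψ ∪
        (fun A ↦ qubitBlocks 0 A A 0) '' pauliStabilizer ψ := by
  have sign_eq_one {e : ℤˣ} (he : e • ψ = ψ) : e = 1 := by
    rcases Int.units_eq_one_or e with rfl | rfl
    · rfl
    · exact absurd (self_eq_neg.1 (by simpa using he.symm)) hψ
  ext M
  constructor
  · rintro ⟨hM, hfix⟩
    obtain ⟨A, hA, e, rfl | rfl⟩ := hM.exists_eq_qubitBlocks <;>
    obtain ⟨hAψ, heAψ⟩ : A *ᵥ ψ = ψ ∧ e • A *ᵥ ψ = ψ := by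
      simpa [qubitBlocks_mulVec_dirac, dirac_inj, smul_mulVec] using hfix
    all_goals obtain rfl := sign_eq_one (hAψ ▸ heAψ)
    · exact .inl ⟨A, ⟨hA, hAψ⟩, by simp⟩
    · exact .inr ⟨A, ⟨hA, hAψ⟩, by simp⟩
  · rintro (⟨A, ⟨hA, hAψ⟩, rfl⟩ | ⟨A, ⟨hA, hAψ⟩, rfl⟩)
    · exact ⟨by simpa using hA.qubitBlocks_diag 1, by simp [qubitBlocks_mulVec_dirac, hAψ]⟩
    · exact ⟨by simpa using hA.qubitBlocks_antidiag 1, by simp [qubitBlocks_mulVec_dirac, hAψ]⟩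

lemma encard_pauliStabilizer_dirac_self (hψ : ψ ≠ 0) :
    (pauliStabilizer (dirac ψ ψ)).encard = 2 * (pauliStabilizer ψ).encard := by
  have hdisj : Disjoint ((fun A ↦ qubitBlocks A 0 0 A) '' pauliStabilizer ψ)
      ((fun A ↦ qubitBlocks 0 A A 0) '' pauliStabilizer ψ) := by
    rw [Set.disjoint_left]
    rintro _ ⟨A, ⟨-, hAψ⟩, rfl⟩ ⟨B, -, h⟩
    obtain rfl : 0 = A := (qubitBlocks_inj.1 h).1
    exact hψ (by simpa using hAψ.symm)
  rw [pauliStabilizer_dirac_self hψ, Set.encard_union_eq hdisj,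
    Function.Injective.encard_image fun _ _ h ↦ (qubitBlocks_inj.1 h).1,
    Function.Injective.encard_image fun _ _ h ↦ (qubitBlocks_inj.1 h).2.1, two_mul]

lemma IsStabilizerState.dirac_self (hψ : IsStabilizerState m ψ) :
    IsStabilizerState (m + 1) ((Real.sqrt 2 : ℂ)⁻¹ • dirac ψ ψ) := by
  obtain ⟨hnorm, hcard : (pauliStabilizer ψ).ncard = 2 ^ m⟩ := hψ
  have hψ0 : ψ ≠ 0 := by rintro rfl; simp at hnorm
  refine ⟨?_, (?_ : (pauliStabilizer _).ncard = 2 ^ (m + 1))⟩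
  · simp only [Pi.smul_apply, smul_eq_mul, map_mul, ← Finset.mul_sum, sum_normSq_dirac, hnorm]
    norm_num
  · rw [pauliStabilizer_smul (by simp), Set.ncard, encard_pauliStabilizer_dirac_self hψ0,
      ENat.toNat_mul, ← Set.ncard, hcard, ENat.toNat_ofNat, pow_succ']

end PlusState

/-- `(|0⟩⊗ψ₀ + λ|1⟩⊗Pψ₀)/√2` is a stabilizer state whenever `ψ₀` is, `P` is a Pauli
string and `λ ∈ {1, −1, i, −i}`. Here `m` plays the role of `n − 1`, so the
hypothesis `n ≥ 2` is `1 ≤ m`. -/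
theorem dirac_of_stabilizer_is_stabilizer (m : ℕ) (hm : 1 ≤ m)
    (ψ₀ : Fin (2 ^ m) → ℂ) (hψ₀ : IsStabilizerState m ψ₀)
    (P : Matrix (Fin (2 ^ m)) (Fin (2 ^ m)) ℂ) (hP : IsPauliString m P)
    (lam : ℂ) (hlam : lam ∈ ({1, -1, Complex.I, -Complex.I} : Set ℂ)) :
    IsStabilizerState (m + 1) ((Real.sqrt 2 : ℂ)⁻¹ • dirac ψ₀ (lam • P.mulVec ψ₀)) := by
  have hlam4 : lam ^ 4 = 1 := by
    rcases hlam with rfl | rfl | rfl | rfl <;> norm_num [neg_pow]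
  have hU : InPauliGroup m (lam • P) := hP.inPauliGroup_smul hlam4
  have hstate : (Real.sqrt 2 : ℂ)⁻¹ • dirac ψ₀ (lam • P *ᵥ ψ₀) =
      controlled (lam • P) *ᵥ ((Real.sqrt 2 : ℂ)⁻¹ • dirac ψ₀ ψ₀) := by
    rw [mulVec_smul, controlled_mulVec_dirac, smul_mulVec]
  rw [hstate]
  exact hU.isClifford_controlled.isStabilizerState_mulVec hψ₀.dirac_self
end
end

section
/- Let G = (V, E) be a finite simple graph with |V| = N, let S ⊆ V, and let M be a nonempty (S, V∖S)-strong matching in G. Order the vertices of V so that all vertices of S come first, and define g : {0,1}^N → ℂ by g(x) = (−1)^{f_G(x)}, where f_G(x) is the number of edges of G whose both endpoints are assigned value 1 by x (under the chosen vertex order). Then g has at least 2^|M| pairwise distinct subfunctions of order |S|. -/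
open Matrix

noncomputable section

/-!
For `A, B ⊆ M`, fix the vertices of `S` to the indicator of the endpoints of `A` and assign the
remaining vertices the indicator of the endpoints of `B`. Every edge between vertices of value `1`
lies in `M` because the matching is strong, and an edge of `M` has both endpoints set to `1` exactly
when it lies in `A` (seen from its endpoint in `S`) and in `B` (seen from the other one). So the
subfunction belonging to `A` takes the value `(-1) ^ |A ∩ B|` at the point belonging to `B`:
these values form a `2 ^ |M| × 2 ^ |M|` Sylvester–Hadamard matrix, whose rows are already told apart
by the singletons `B = {e}`.
-/

section SignMatrix

variable {α β R : Type*} [Monoid R] [HasDistribNeg R]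

theorem neg_one_pow_ncard_inter_singleton_eq_neg_one_iff (hR : (-1 : R) ≠ 1) {A : Set α} {e : α} :
    (-1 : R) ^ (A ∩ {e}).ncard = -1 ↔ e ∈ A := by
  rw [neg_one_pow_eq_neg_one_iff_odd hR]
  by_cases he : e ∈ A <;> simp [he]

theorem injOn_powerset_of_eq_neg_one_pow_ncard_inter_singleton (hR : (-1 : R) ≠ 1) {M : Set α}
    {F : Set α → β → R} {t : α → β}
    (hF : ∀ A ⊆ M, ∀ e ∈ M, F A (t e) = (-1) ^ (A ∩ {e}).ncard) : (𝒫 M).InjOn F := by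
  intro A hA B hB hAB
  have mem_iff (C : Set α) (hC : C ⊆ M) (e : α) (he : e ∈ M) : F C (t e) = -1 ↔ e ∈ C := by
    rw [hF C hC e he, neg_one_pow_ncard_inter_singleton_eq_neg_one_iff hR]
  refine Set.Subset.antisymm (fun e he ↦ ?_) (fun e he ↦ ?_)
  · rwa [← mem_iff B hB e (hA he), ← hAB, mem_iff A hA e (hA he)]
  · rwa [← mem_iff A hA e (hB he), hAB, mem_iff B hB e (hB he)]

end SignMatrix

section StrongMatching

variable {V : Type*} {G : SimpleGraph V} {S T U : Set V} {M A B : Set (Sym2 V)}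

/-- The vertices covered by a set of edges; their indicator encodes a set of matching edges as an
assignment of the vertices. -/
def endpoints (M : Set (Sym2 V)) : Set V := {v | ∃ e ∈ M, v ∈ e}

/-- The edges of the subgraph of `G` induced by `U`, as a set of edges of `G` itself. Their number
is `f_G` at the indicator of `U`. -/
def inducedEdges (G : SimpleGraph V) (U : Set V) : Set (Sym2 V) := {e ∈ G.edgeSet | ∀ v ∈ e, v ∈ U}

theorem endpoints_mono (h : A ⊆ B) : endpoints A ⊆ endpoints B :=
  fun _ ⟨e, he, hv⟩ ↦ ⟨e, h he, hv⟩

theorem IsStrongMatching.inducedEdges_subset (hM : IsStrongMatching G M) (hU : U ⊆ endpoints M) :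
    inducedEdges G U ⊆ M :=
  fun e he ↦ hM.2.2 e he.1 fun v hv ↦ hU (he.2 v hv)

theorem IsStrongMatching.mem_of_mem_endpoints (hM : IsStrongMatching G M) (hA : A ⊆ M) {e : Sym2 V}
    (he : e ∈ M) {v : V} (hve : v ∈ e) (hvA : v ∈ endpoints A) : e ∈ A := by
  obtain ⟨e', he', hve'⟩ := hvA
  have h_eq : e = e' := by
    by_contra h_ne
    exact hM.2.1 e he e' (hA he') h_ne v hve hve'
  rwa [h_eq]

theorem IsSTStrongMatching.inducedEdges_ite_endpoints (hM : IsSTStrongMatching G S T M)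
    (hST : Disjoint S T) (hA : A ⊆ M) (hB : B ⊆ M) :
    inducedEdges G (S.ite (endpoints A) (endpoints B)) = A ∩ B := by
  obtain ⟨hstrong, hcross⟩ := hM
  refine Set.Subset.antisymm (fun e he ↦ ?_) (fun e he ↦ ⟨hstrong.1 (hA he.1), fun v hv ↦ ?_⟩)
  · have heM : e ∈ M := hstrong.inducedEdges_subset ((Set.ite_subset_union ..).trans
      (Set.union_subset (endpoints_mono hA) (endpoints_mono hB))) he
    obtain ⟨u, hu, w, hw, rfl⟩ := hcross e heM
    have huA : u ∈ endpoints A :=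
      (he.2 u (Sym2.mem_mk_left u w)).elim And.left fun h ↦ absurd hu h.2
    have hwS : w ∉ S := hST.notMem_of_mem_right hw
    have hwB : w ∈ endpoints B :=
      (he.2 w (Sym2.mem_mk_right u w)).elim (fun h ↦ absurd h.2 hwS) And.left
    exact ⟨hstrong.mem_of_mem_endpoints hA heM (Sym2.mem_mk_left u w) huA,
      hstrong.mem_of_mem_endpoints hB heM (Sym2.mem_mk_right u w) hwB⟩
  · exact Set.inter_subset_ite S _ _ ⟨⟨e, he.1, hv⟩, ⟨e, he.2, hv⟩⟩

end StrongMatching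

section Subfunction

variable {V : Type*} {N ℓ : ℕ}

open Classical in
/-- The values of the indicator of `P` on the first `ℓ` vertices in the order `σ`, as the fixed
arguments of a subfunction of order `ℓ`. -/
def headIndicator (σ : Fin N → V) (hℓ : ℓ ≤ N) (P : Set V) : Fin ℓ → Bool :=
  fun i ↦ decide (σ (i.castLE hℓ) ∈ P)

open Classical in
/-- The values of the indicator of `Q` on all but the first `ℓ` vertices in the order `σ`, as a
point at which to evaluate a subfunction of order `ℓ`. -/
def tailIndicator (σ : Fin N → V) (ℓ : ℕ) (Q : Set V) : Fin (N - ℓ) → Bool :=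
  fun j ↦ decide (σ ⟨ℓ + j, Nat.add_lt_of_lt_sub' j.isLt⟩ ∈ Q)

theorem subfun_headIndicator_tailIndicator (σ : Fin N ≃ V) {S : Set V}
    (hσ : ∀ i : Fin N, σ i ∈ S ↔ (i : ℕ) < ℓ) (hℓ : ℓ ≤ N) (F : Set V → ℂ) (P Q : Set V) :
    subfun (fun x ↦ F {v | x (σ.symm v) = true}) ℓ
      (headIndicator σ hℓ P) (tailIndicator σ ℓ Q) = F (S.ite P Q) := by
  refine congrArg F (Set.ext fun v ↦ ?_)
  obtain ⟨i, rfl⟩ := σ.surjective v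
  by_cases hi : (i : ℕ) < ℓ
  · have hS : σ i ∈ S := (hσ i).2 hi
    simp [headIndicator, Set.ite, hi, hS]
  · have hS : σ i ∉ S := mt (hσ i).1 hi
    simp [tailIndicator, Set.ite, hi, hS, Nat.add_sub_cancel' (not_lt.1 hi)]

end Subfunction

/-- A nonempty `(S, V∖S)`-strong matching `M` forces at least `2^|M|` distinct
subfunctions of order `|S|` of the graph-state sign function, under any vertex
order placing `S` first. -/
theorem strong_matching_yields_subfunctions (V : Type*) [Fintype V]
    (G : SimpleGraph V) (S : Set V) (M : Set (Sym2 V))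
    (hM : IsSTStrongMatching G S Sᶜ M) (hMne : M.Nonempty)
    (σ : Fin (Fintype.card V) ≃ V)
    (hσ : ∀ i : Fin (Fintype.card V), σ i ∈ S ↔ (i : ℕ) < S.ncard) :
    2 ^ M.ncard ≤
      Set.ncard {h : (Fin (Fintype.card V - S.ncard) → Bool) → ℂ |
        ∃ a : Fin S.ncard → Bool,
          h = subfun (fun x : Fin (Fintype.card V) → Bool =>
              (-1 : ℂ) ^ Set.ncard {e ∈ G.edgeSet | ∀ v ∈ e, x (σ.symm v) = true})
            S.ncard a} := by
  have hSV : S.ncard ≤ Fintype.card V := Nat.card_eq_fintype_card (α := V) ▸ Set.ncard_le_card S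
  let sign (U : Set V) : ℂ := (-1) ^ (inducedEdges G U).ncard
  let g (x : Fin (Fintype.card V) → Bool) : ℂ := sign {v | x (σ.symm v) = true}
  let a (A : Set (Sym2 V)) : Fin S.ncard → Bool := headIndicator σ hSV (endpoints A)
  have eval_eq (A : Set (Sym2 V)) (hA : A ⊆ M) (e : Sym2 V) (he : e ∈ M) :
      subfun g S.ncard (a A) (tailIndicator σ S.ncard (endpoints {e})) =
        (-1) ^ (A ∩ {e}).ncard := by
    rw [subfun_headIndicator_tailIndicator σ hσ hSV sign, ← hM.inducedEdges_ite_endpoints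
      disjoint_compl_right hA (Set.singleton_subset_iff.2 he)]
  have injOn_subfun : (𝒫 M).InjOn fun A ↦ subfun g S.ncard (a A) :=
    injOn_powerset_of_eq_neg_one_pow_ncard_inter_singleton (by norm_num) eval_eq
  rw [← Set.ncard_powerset M]
  refine Set.ncard_le_ncard_of_injOn _ (fun A _ ↦ ⟨a A, rfl⟩) injOn_subfun ?_
  exact (Set.finite_range (subfun g S.ncard)).subset fun _ ⟨b, hb⟩ ↦ ⟨b, hb.symm⟩

end
end

section
/- Let n ≥ 1 and let S be a set of ⌊n²/2⌋ vertices of the n×n grid graph with vertex set V. Then the n×n grid graph contains an (S, V∖S)-strong matching of size at least ⌊n/12⌋. -/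
open Matrix

noncomputable section

/-! Call a row *split* if it meets both `S` and its complement. A split row is connected, so it
contains an edge leaving `S`; such edges taken from pairwise non-adjacent rows form a strong
matching, and a proper colouring of the set of rows by `k` colours loses only a factor `k`.
If some row lies inside `S` and some other row avoids it, then every column is split, and the same
construction applies to the columns. Otherwise `S` or `Sᶜ` is covered by the split rows, so there
are many of these. Nothing here is special to paths: the argument takes place in the box product of
two connected graphs. -/

open SimpleGraph

section InducedMatching

variable {V ι : Type*} {G : SimpleGraph V} {S T : Set V} {u w : ι → V}

/-- A strong matching given as an indexed family of edges, the `i`-th one joining `u i` to `w i`.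
It is `adj_iff` that encodes the disjointness of the edges. -/
structure IsInducedMatching (G : SimpleGraph V) (u w : ι → V) : Prop where
  not_adj_left : ∀ i j, ¬ G.Adj (u i) (u j)
  not_adj_right : ∀ i j, ¬ G.Adj (w i) (w j)
  adj_iff : ∀ i j, G.Adj (u i) (w j) ↔ i = j

namespace IsInducedMatching

theorem eq_of_mem (h : IsInducedMatching G u w) {i j : ι} {v : V}
    (hi : v ∈ s(u i, w i)) (hj : v ∈ s(u j, w j)) : i = j := by
  have adj_self (k : ι) : G.Adj (u k) (w k) := (h.adj_iff k k).2 rfl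
  rcases Sym2.mem_iff.1 hi with rfl | rfl <;> rcases Sym2.mem_iff.1 hj with hv | hv
  · exact ((h.adj_iff j i).1 (hv ▸ adj_self i)).symm
  · exact absurd (hv ▸ adj_self i) (h.not_adj_right j i)
  · exact absurd (hv ▸ adj_self i) (h.not_adj_left i j)
  · exact (h.adj_iff i j).1 (hv ▸ adj_self i)

theorem injective (h : IsInducedMatching G u w) : Function.Injective fun i ↦ s(u i, w i) :=
  fun i j (hij : s(u i, w i) = s(u j, w j)) ↦
    h.eq_of_mem (Sym2.mem_mk_left _ _) (hij ▸ Sym2.mem_mk_left _ _)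

theorem isStrongMatching_range (h : IsInducedMatching G u w) :
    IsStrongMatching G (Set.range fun i ↦ s(u i, w i)) := by
  refine ⟨?_, ?_, fun e ↦ ?_⟩
  · rintro _ ⟨i, rfl⟩
    exact (h.adj_iff i i).2 rfl
  · rintro _ ⟨i, rfl⟩ _ ⟨j, rfl⟩ hne v hi hj
    exact hne (by rw [h.eq_of_mem hi hj])
  · induction e using Sym2.ind with | _ x y =>
    intro hxy hcover
    obtain ⟨_, ⟨i, rfl⟩, hx⟩ := hcover x (Sym2.mem_mk_left x y)
    obtain ⟨_, ⟨j, rfl⟩, hy⟩ := hcover y (Sym2.mem_mk_right x y)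
    rw [mem_edgeSet] at hxy
    rcases Sym2.mem_iff.1 hx with rfl | rfl <;> rcases Sym2.mem_iff.1 hy with rfl | rfl
    · exact absurd hxy (h.not_adj_left i j)
    · exact ⟨i, by rw [(h.adj_iff i j).1 hxy]⟩
    · exact ⟨i, by rw [(h.adj_iff j i).1 hxy.symm, Sym2.eq_swap]⟩
    · exact absurd hxy (h.not_adj_right i j)

theorem isSTStrongMatching_range (h : IsInducedMatching G u w)
    (hu : ∀ i, u i ∈ S) (hw : ∀ i, w i ∈ T) :
    IsSTStrongMatching G S T (Set.range fun i ↦ s(u i, w i)) := by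
  refine ⟨h.isStrongMatching_range, ?_⟩
  rintro _ ⟨i, rfl⟩
  exact ⟨u i, hu i, w i, hw i, rfl⟩

theorem comp_embedding {W : Type*} {H : SimpleGraph W} (h : IsInducedMatching G u w)
    (φ : G ↪g H) : IsInducedMatching H (φ ∘ u) (φ ∘ w) where
  not_adj_left i j := φ.map_adj_iff.not.2 (h.not_adj_left i j)
  not_adj_right i j := φ.map_adj_iff.not.2 (h.not_adj_right i j)
  adj_iff i j := φ.map_adj_iff.trans (h.adj_iff i j)

end IsInducedMatching

end InducedMatching

section BoxProd

variable {V α β : Type*} {Γ : SimpleGraph V} {G : SimpleGraph α} {H : SimpleGraph β}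

theorem exists_adj_mem_notMem_of_preconnected (hH : H.Preconnected) {T : Set β}
    (hT : T.Nonempty) (hTc : Tᶜ.Nonempty) : ∃ c ∈ T, ∃ d ∉ T, H.Adj c d := by
  obtain ⟨⟨a, ha⟩, b, hb⟩ := hT, hTc
  obtain ⟨p⟩ := hH a b
  obtain ⟨e, -, he₁, he₂⟩ := p.exists_boundary_dart T ha hb
  exact ⟨e.fst, he₁, e.snd, he₂, e.adj⟩

theorem exists_isIndepSet_card_le_mul_card_of_colorable {k : ℕ} (hG : G.Colorable k)
    (R : Finset α) : ∃ I ⊆ R, G.IsIndepSet I ∧ R.card ≤ k * I.card := by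
  classical
  obtain ⟨C⟩ := hG
  obtain rfl | ⟨a, -⟩ := R.eq_empty_or_nonempty
  · exact ⟨∅, subset_rfl, by simp, by simp⟩
  obtain ⟨c, -, hmax⟩ := Finset.univ.exists_max_image
    (fun c ↦ (R.filter (C · = c)).card) ⟨C a, Finset.mem_univ _⟩
  refine ⟨R.filter (C · = c), R.filter_subset _, ?_, ?_⟩
  · exact (C.isIndepSet_colorClass c).mono fun v hv ↦ (Finset.mem_filter.1 hv).2
  · simpa [mul_comm] using
      Finset.card_le_mul_card_image_of_maps_to (fun v _ ↦ Finset.mem_univ (C v)) _ hmax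

theorem isInducedMatching_boxProd {I : Set α} (hI : G.IsIndepSet I) {c d : I → β}
    (hcd : ∀ a, H.Adj (c a) (d a)) :
    IsInducedMatching (G □ H) (fun a : I ↦ (↑a, c a)) (fun a : I ↦ (↑a, d a)) := by
  have not_adj (a a' : I) : ¬ G.Adj a a' := fun h ↦ hI a.2 a'.2 h.ne h
  refine ⟨?_, ?_, ?_⟩
  · rintro a a' (⟨h, -⟩ | ⟨h, haa'⟩)
    · exact not_adj a a' h
    · exact h.ne (congrArg c (Subtype.ext haa'))
  · rintro a a' (⟨h, -⟩ | ⟨h, haa'⟩)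
    · exact not_adj a a' h
    · exact h.ne (congrArg d (Subtype.ext haa'))
  · refine fun a a' ↦ ⟨?_, ?_⟩
    · rintro (⟨h, -⟩ | ⟨-, haa'⟩)
      · exact absurd h (not_adj a a')
      · exact Subtype.ext haa'
    · rintro rfl
      exact boxProd_adj_right.2 (hcd a)

/-- The first coordinates `a` whose fibre `{a} × β`, the row of `a`, meets both `S` and its
complement. -/
def splitRows (S : Set (α × β)) : Set α :=
  {a | (∃ b, (a, b) ∈ S) ∧ ∃ b, (a, b) ∉ S}

theorem ncard_le_ncard_splitRows_mul [Finite α] [Finite β] {S : Set (α × β)}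
    (hS : ∀ a, ∃ b, (a, b) ∉ S) : S.ncard ≤ (splitRows S).ncard * Nat.card β := by
  rw [← Set.ncard_univ, ← Set.ncard_prod]
  exact Set.ncard_le_ncard fun p hp ↦ ⟨⟨⟨p.2, hp⟩, hS p.1⟩, Set.mem_univ _⟩

theorem splitRows_compl (S : Set (α × β)) : splitRows Sᶜ = splitRows S := by
  ext a
  simp [splitRows, and_comm]

theorem splitRows_preimage_swap_eq_univ {S : Set (α × β)} (hfull : ∃ a, ∀ b, (a, b) ∈ S)
    (hempty : ∃ a, ∀ b, (a, b) ∉ S) : splitRows (Prod.swap ⁻¹' S) = Set.univ := by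
  obtain ⟨⟨a, ha⟩, a', ha'⟩ := hfull, hempty
  exact Set.eq_univ_of_forall fun b ↦ ⟨⟨a, ha b⟩, a', ha' b⟩

/-- The embedding `φ` serves to treat the rows and the columns of a box product alike. -/
theorem exists_isSTStrongMatching_of_embedding_boxProd [Finite α] {k : ℕ} (hG : G.Colorable k)
    (hH : H.Preconnected) (φ : G.boxProd H ↪g Γ) (S : Set V) :
    ∃ M : Set (Sym2 V), IsSTStrongMatching Γ S Sᶜ M ∧
      (splitRows (φ ⁻¹' S)).ncard ≤ k * M.ncard := by
  obtain ⟨I, hIsplit, hI, hcard⟩ := exists_isIndepSet_card_le_mul_card_of_colorable hG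
    (splitRows (φ ⁻¹' S)).toFinite.toFinset
  have hcross (a : (I : Set α)) : ∃ c d, φ (a, c) ∈ S ∧ φ (a, d) ∉ S ∧ H.Adj c d := by
    obtain ⟨hmeets, hmisses⟩ := (Set.Finite.mem_toFinset _).1 (hIsplit a.2)
    obtain ⟨c, hc, d, hd, hadj⟩ := exists_adj_mem_notMem_of_preconnected hH
      (T := {b | φ (a, b) ∈ S}) hmeets hmisses
    exact ⟨c, d, hc, hd, hadj⟩
  choose c d hc hd hadj using hcross
  have hind := (isInducedMatching_boxProd hI hadj).comp_embedding φ
  refine ⟨_, hind.isSTStrongMatching_range hc hd, ?_⟩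
  rw [Set.ncard_range_of_injective hind.injective, Nat.card_coe_set_eq, Set.ncard_coe_finset]
  rwa [Set.ncard_eq_toFinset_card]

theorem exists_isSTStrongMatching_boxProd [Finite α] [Finite β] {k : ℕ} (hG : G.Preconnected)
    (hGk : G.Colorable k) (hH : H.Preconnected) (hHk : H.Colorable k) (S : Set (α × β)) :
    ∃ M : Set (Sym2 (α × β)), IsSTStrongMatching (G □ H) S Sᶜ M ∧
      min S.ncard Sᶜ.ncard ≤ max (Nat.card α) (Nat.card β) * (k * M.ncard) := by
  by_cases hfe : (∃ a, ∀ b, (a, b) ∈ S) ∧ ∃ a, ∀ b, (a, b) ∉ S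
  · obtain ⟨M, hM, hcard⟩ := exists_isSTStrongMatching_of_embedding_boxProd hHk hG
      (boxProdComm H G).toEmbedding S
    replace hcard : Nat.card β ≤ k * M.ncard := by
      rwa [← Set.ncard_univ, ← splitRows_preimage_swap_eq_univ hfe.1 hfe.2]
    refine ⟨M, hM, ?_⟩
    calc min S.ncard Sᶜ.ncard ≤ S.ncard := min_le_left _ _
      _ ≤ Nat.card α * Nat.card β := Nat.card_prod α β ▸ Set.ncard_le_card S
      _ ≤ _ := Nat.mul_le_mul (le_max_left _ _) hcard
  · obtain ⟨M, hM, hcard⟩ := exists_isSTStrongMatching_of_embedding_boxProd hGk hH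
      (Embedding.refl (G := G □ H)) S
    replace hcard : (splitRows S).ncard ≤ k * M.ncard := hcard
    refine ⟨M, hM, ?_⟩
    have hcover : min S.ncard Sᶜ.ncard ≤ (splitRows S).ncard * Nat.card β := by
      rcases not_and_or.1 hfe with hfull | hempty
      · push Not at hfull
        exact min_le_of_left_le (ncard_le_ncard_splitRows_mul hfull)
      · push Not at hempty
        rw [← splitRows_compl S]
        exact min_le_of_right_le (ncard_le_ncard_splitRows_mul (by simpa using hempty))
    calc min S.ncard Sᶜ.ncard ≤ Nat.card β * (splitRows S).ncard := by rwa [mul_comm]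
      _ ≤ _ := Nat.mul_le_mul (le_max_right _ _) hcard

end BoxProd

theorem gridGraph_eq_boxProd_pathGraph (n : ℕ) : gridGraph n = pathGraph n □ pathGraph n := by
  ext ⟨i, j⟩ ⟨i', j'⟩
  simp only [gridGraph, fromRel_adj, boxProd_adj, pathGraph_adj, ne_eq, Prod.mk.injEq, Fin.ext_iff]
  omega

theorem grid_graph_large_strong_matching_general (n : ℕ) (S : Set (Fin n × Fin n)) :
    ∃ M : Set (Sym2 (Fin n × Fin n)),
      IsSTStrongMatching (gridGraph n) S Sᶜ M ∧ min S.ncard Sᶜ.ncard ≤ n * (2 * M.ncard) := by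
  have hcol : (pathGraph n).Colorable 2 := (pathGraph.bicoloring n).colorable
  simpa only [gridGraph_eq_boxProd_pathGraph, Nat.card_fin, max_self] using
    exists_isSTStrongMatching_boxProd (pathGraph_preconnected n) hcol
      (pathGraph_preconnected n) hcol S

/-- Any half of the vertices of the `n × n` grid graph admits an `(S, Sᶜ)`-strong
matching of size at least `⌊n/12⌋`. -/
theorem grid_graph_large_strong_matching (n : ℕ) (hn : 1 ≤ n)
    (S : Set (Fin n × Fin n)) (hS : S.ncard = n ^ 2 / 2) :
    ∃ M : Set (Sym2 (Fin n × Fin n)),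
      IsSTStrongMatching (gridGraph n) S Sᶜ M ∧ n / 12 ≤ M.ncard := by
  obtain ⟨M, hM, hcard⟩ := grid_graph_large_strong_matching_general n S
  have hcompl : S.ncard + Sᶜ.ncard = n ^ 2 := by
    simpa [sq] using Set.ncard_add_ncard_compl S
  have hhalf : n / 2 ≤ 2 * M.ncard := by
    refine Nat.le_of_mul_le_mul_left ?_ hn
    calc n * (n / 2) ≤ n ^ 2 / 2 := sq n ▸ Nat.mul_div_le_mul_div_assoc n n 2
      _ ≤ min S.ncard Sᶜ.ncard := by omega
      _ ≤ n * (2 * M.ncard) := hcard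
  exact ⟨M, hM, by omega⟩

end
end
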